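/- arXiv:2304.11333 — 5 statements merged into one kernel-verified Lean document; each statement's English description precedes it below -/
import Mathlib

section
/- Let n ≥ 1 and let s be an integer with 1 ≤ s ≤ n. Let a_1, …, a_s be positive integers with a_1 + ⋯ + a_s = n, and let N be the number of (unordered) set partitions of {1, …, n} into s blocks whose multiset of block sizes equals the multiset {a_1, …, a_s}. If s ≠ 1, s ≠ n, and it is not the case that n = 4, s = 2 and a_1 = a_2 = 2, then N ≥ n. -/
/-! Classifying set partitions by the block that contains a fixed element shows that the number of
set partitions with block sizes `m` satisfies the recursion `Nat.bell_eq_sum_erase` of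
`Multiset.bell`, so it equals `m.bell`.

It remains to bound `m.bell` from below. With `m.sum = n + 1`, the recursion gives
`∑ k ∈ m.toFinset, n.choose (k - 1) ≤ m.bell`. If sizes `k < l` both occur in `m`, the term of `l`
is at least `n` and the term of `k` at least `1`. If all blocks have the same size `k`, then
`m.bell` is a product of binomial coefficients, of which the largest is enough for `3 ≤ k` and the
two largest are enough for `k = 2`. -/

open Finset

section Avoid

variable {β : Type*} [GeneralizedBooleanAlgebra β] {a b : β}

lemma notMem_parts_of_sdiff (hb : b ≠ ⊥) (Q : Finpartition (a \ b)) : b ∉ Q.parts :=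
  fun h ↦ hb <| disjoint_self.1 <| disjoint_sdiff_self_right.mono_right (Q.le h)

lemma parts_avoid_of_mem [DecidableEq β] {P : Finpartition a} (hb : b ∈ P.parts) :
    (P.avoid b).parts = P.parts.erase b := by
  have disjoint_b {c : β} (hc : c ∈ P.parts) (hne : c ≠ b) : Disjoint c b := P.disjoint hc hb hne
  ext c
  rw [Finpartition.mem_avoid, mem_erase]
  constructor
  · rintro ⟨d, hd, hdb, rfl⟩
    have hne : d ≠ b := fun h ↦ hdb h.le
    rw [(disjoint_b hd hne).sdiff_eq_left]
    exact ⟨hne, hd⟩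
  · rintro ⟨hne, hc⟩
    have hdisj := disjoint_b hc hne
    exact ⟨c, hc, fun hcb ↦ P.ne_bot hc (hdisj.eq_bot_of_le hcb), hdisj.sdiff_eq_left⟩

end Avoid

section SetPartitions

variable {α : Type*} [DecidableEq α] {S B : Finset α} {x : α} {m : Multiset ℕ}

/-- The set partitions of `S` whose multiset of block sizes is `m`. -/
def partitionsOfShape (S : Finset α) (m : Multiset ℕ) : Finset (Finpartition S) :=
  {P | P.parts.val.map card = m}

lemma mem_partitionsOfShape {P : Finpartition S} :
    P ∈ partitionsOfShape S m ↔ P.parts.val.map card = m := by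
  simp [partitionsOfShape]

lemma card_filter_part_eq (hx : x ∈ B) (hBS : B ⊆ S) (hBm : #B ∈ m) :
    #{P ∈ partitionsOfShape S m | P.part x = B} = #(partitionsOfShape (S \ B) (m.erase #B)) := by
  have hB : B.Nonempty := ⟨x, hx⟩
  have mem_parts {P : Finpartition S} (hP : P.part x = B) : B ∈ P.parts :=
    hP ▸ P.part_mem.2 (hBS hx)
  refine card_nbij' (·.avoid B)
    (·.extend hB.ne_empty sdiff_disjoint (sdiff_union_of_subset hBS)) ?_ ?_ ?_ ?_
  · intro P hP
    obtain ⟨hPm, hPx⟩ := mem_filter.1 hP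
    rw [mem_coe, mem_partitionsOfShape, parts_avoid_of_mem (mem_parts hPx), erase_val,
      Multiset.map_erase_of_mem _ _ (mem_parts hPx), mem_partitionsOfShape.1 hPm]
  · intro Q hQ
    rw [mem_coe, mem_partitionsOfShape] at hQ
    rw [mem_coe, mem_filter, mem_partitionsOfShape, Finpartition.extend_parts,
      insert_val_of_notMem (notMem_parts_of_sdiff hB.ne_empty Q), Multiset.map_cons, hQ]
    exact ⟨Multiset.cons_erase hBm, Finpartition.part_eq_of_mem _ (mem_insert_self _ _) hx⟩
  · intro P hP
    have hBP := mem_parts (mem_filter.1 hP).2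
    ext1
    rw [Finpartition.extend_parts, parts_avoid_of_mem hBP, insert_erase hBP]
  · intro Q _
    ext1
    rw [parts_avoid_of_mem (mem_insert_self _ _), Finpartition.extend_parts,
      erase_insert (notMem_parts_of_sdiff hB.ne_empty Q)]

lemma card_partitionsOfShape_eq_sum (hx : x ∈ S) (m : Multiset ℕ) :
    #(partitionsOfShape S m) =
      ∑ k ∈ m.toFinset, ∑ B ∈ S.powersetCard k with x ∈ B,
        #(partitionsOfShape (S \ B) (m.erase k)) := by
  rw [card_eq_sum_card_fiberwise (f := fun P ↦ #(P.part x)) (t := m.toFinset)]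
  · refine sum_congr rfl fun k hk ↦ ?_
    rw [card_eq_sum_card_fiberwise (f := fun P ↦ P.part x) (t := {B ∈ S.powersetCard k | x ∈ B})]
    · refine sum_congr rfl fun B hB ↦ ?_
      obtain ⟨⟨hBS, rfl⟩, hxB⟩ := by simpa only [mem_filter, mem_powersetCard] using hB
      rw [← card_filter_part_eq hxB hBS (Multiset.mem_toFinset.1 hk), filter_filter]
      congr! 2 with P
      exact and_iff_right_of_imp (congrArg card)
    · intro P hP
      simp only [coe_filter, Set.mem_ofPred_eq, mem_powersetCard] at hP ⊢
      exact ⟨⟨P.part_subset x, hP.2⟩, P.mem_part_self.2 hx⟩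
  · intro P hP
    rw [mem_coe, mem_partitionsOfShape] at hP
    rw [mem_coe, Multiset.mem_toFinset, ← hP]
    exact Multiset.mem_map_of_mem card (P.part_mem.2 hx)

lemma card_powersetCard_filter_mem {k : ℕ} (hx : x ∈ S) (hk : 0 < k) :
    #{B ∈ S.powersetCard k | x ∈ B} = (#S - 1).choose (k - 1) := by
  simpa only [singleton_subset_iff, card_singleton] using
    card_filter_powersetCard_subset {x} S k (singleton_subset_iff.2 hx) hk

theorem card_partitionsOfShape (hpos : ∀ k ∈ m, 0 < k) (hsum : m.sum = #S) :
    #(partitionsOfShape S m) = m.bell := by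
  induction S using Finset.strongInduction generalizing m with
  | H S ih =>
    obtain rfl | ⟨x, hx⟩ := S.eq_empty_or_nonempty
    · obtain rfl : m = 0 := Multiset.eq_zero_of_forall_notMem fun k hk ↦
        (hpos k hk).ne' (Multiset.sum_eq_zero_iff.1 hsum k hk)
      rw [Multiset.bell_zero, card_eq_one]
      have hunique (P : Finpartition (∅ : Finset α)) : P.parts = ∅ := P.parts_eq_empty_iff.2 rfl
      refine ⟨.empty _, eq_singleton_iff_unique_mem.2 ⟨?_, fun P _ ↦ ?_⟩⟩
      · simp [mem_partitionsOfShape, hunique]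
      · ext1
        rw [hunique]
        rfl
    · have hS : #S - 1 + 1 = #S := Nat.sub_add_cancel (card_pos.2 ⟨x, hx⟩)
      rw [card_partitionsOfShape_eq_sum hx,
        Nat.bell_eq_sum_erase ⟨m, hpos _, hsum.trans hS.symm⟩]
      refine sum_congr rfl fun k hk ↦ ?_
      replace hk := Multiset.mem_toFinset.1 hk
      rw [← card_powersetCard_filter_mem hx (hpos k hk)]
      refine sum_const_nat fun B hB ↦ ?_
      obtain ⟨⟨hBS, rfl⟩, hxB⟩ := by simpa only [mem_filter, mem_powersetCard] using hB
      refine ih _ (sdiff_ssubset hBS ⟨x, hxB⟩) (fun l hl ↦ hpos l (Multiset.mem_of_mem_erase hl)) ?_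
      have := Multiset.sum_erase hk
      rw [card_sdiff_of_subset hBS]
      lia

end SetPartitions

section Choose

variable {n k : ℕ}

lemma le_choose_of_pos_of_lt (hk : 0 < k) (hkn : k < n) : n ≤ n.choose k := by
  induction n with
  | zero => lia
  | succ n ih =>
    obtain ⟨k, rfl⟩ := Nat.exists_eq_add_one.2 hk
    obtain hlt | rfl : k + 1 < n ∨ k + 1 = n := by lia
    · have := Nat.choose_pos (n := n) (k := k) (by lia)
      have := ih hlt
      rw [Nat.choose_succ_succ]
      lia
    · rw [Nat.choose_succ_self_right]

lemma succ_le_choose (hk : 2 ≤ k) (hkn : k + 2 ≤ n) : n + 1 ≤ n.choose k := by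
  obtain ⟨n, rfl⟩ := Nat.exists_eq_add_one.2 (show 0 < n by lia)
  obtain ⟨k, rfl⟩ := Nat.exists_eq_add_one.2 (show 0 < k by lia)
  have := le_choose_of_pos_of_lt (n := n) (k := k) (by lia) (by lia)
  have := le_choose_of_pos_of_lt (n := n) (k := k + 1) (by lia) (by lia)
  rw [Nat.choose_succ_succ]
  lia

end Choose

section Bell

variable {m : Multiset ℕ}

lemma bell_pos (m : Multiset ℕ) : 0 < m.bell := by
  have h := m.sum.factorial_pos
  rw [← Multiset.bell_mul_eq, mul_assoc] at h
  exact Nat.pos_of_mul_pos_right h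

lemma sum_choose_le_bell {n : ℕ} (p : (n + 1).Partition) :
    ∑ k ∈ p.parts.toFinset, n.choose (k - 1) ≤ p.parts.bell := by
  rw [Nat.bell_eq_sum_erase]
  exact sum_le_sum fun k _ ↦ Nat.le_mul_of_pos_right _ (bell_pos _)

lemma sum_le_bell_of_mem_of_lt {k l : ℕ} (hpos : ∀ i ∈ m, 0 < i) (hk : k ∈ m) (hl : l ∈ m)
    (hkl : k < l) : m.sum ≤ m.bell := by
  have hk0 := hpos k hk
  have hadd : k + l ≤ m.sum := by
    rw [← Multiset.sum_erase hk]
    gcongr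
    exact Multiset.le_sum_of_mem ((Multiset.mem_erase_of_ne hkl.ne').2 hl)
  obtain ⟨n, hn⟩ := Nat.exists_eq_add_one.2 (show 0 < m.sum by lia)
  calc m.sum = 1 + n := by lia
    _ ≤ n.choose (k - 1) + n.choose (l - 1) :=
      add_le_add (Nat.choose_pos (by lia)) (le_choose_of_pos_of_lt (by lia) (by lia))
    _ = ∑ i ∈ {k, l}, n.choose (i - 1) := by rw [sum_pair hkl.ne]
    _ ≤ ∑ i ∈ m.toFinset, n.choose (i - 1) :=
      sum_le_sum_of_subset (by simp [insert_subset_iff, hk, hl])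
    _ ≤ m.bell := sum_choose_le_bell ⟨m, hpos _, hn⟩

lemma mul_le_uniformBell {j k : ℕ} (hj : 2 ≤ j) (hk : 2 ≤ k) (hjk : ¬(j = 2 ∧ k = 2)) :
    j * k ≤ j.uniformBell k := by
  obtain ⟨j, rfl⟩ := Nat.exists_eq_add_one.2 (show 0 < j by lia)
  obtain rfl | hk3 := hk.eq_or_lt
  · obtain ⟨j, rfl⟩ : ∃ i, j = i + 2 := ⟨j - 2, by lia⟩
    have hpos : 0 < (j + 1).uniformBell 2 := bell_pos _
    simp only [Nat.uniformBell_succ_left (_ + 1), Nat.add_one_sub_one, Nat.choose_one_right]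
    calc (j + 2 + 1) * 2 ≤ ((j + 2) * 2 + 1) * ((j + 1) * 2 + 1) := by nlinarith
      _ ≤ ((j + 2) * 2 + 1) * (((j + 1) * 2 + 1) * (j + 1).uniformBell 2) := by
        gcongr
        exact Nat.le_mul_of_pos_right _ hpos
  · have hle : k ≤ j * k := Nat.le_mul_of_pos_left k (by lia)
    calc (j + 1) * k = j * k + k - 1 + 1 := by grind
      _ ≤ (j * k + k - 1).choose (k - 1) := succ_le_choose (by lia) (by lia)
      _ ≤ (j + 1).uniformBell k := by
        rw [Nat.uniformBell_succ_left]
        exact Nat.le_mul_of_pos_right _ (bell_pos _)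

theorem sum_le_bell (hpos : ∀ k ∈ m, 0 < k) (hcard : m.card ≠ 1) (hsum : m.card ≠ m.sum)
    (hexc : m ≠ {2, 2}) : m.sum ≤ m.bell := by
  obtain rfl | ⟨k, hk⟩ := m.empty_or_exists_mem
  · exact Nat.zero_le _
  by_cases huniform : ∀ l ∈ m, l = k
  · obtain ⟨j, rfl⟩ : ∃ j, m = .replicate j k := ⟨_, Multiset.eq_replicate_card.2 huniform⟩
    simp only [Multiset.card_replicate, Multiset.sum_replicate, smul_eq_mul] at hcard hsum ⊢
    have hk0 := hpos k hk
    have hj0 : j ≠ 0 := by rintro rfl; exact hsum (zero_mul k).symm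
    have hk1 : k ≠ 1 := by rintro rfl; exact hsum (mul_one j).symm
    refine mul_le_uniformBell (by lia) (by lia) ?_
    rintro ⟨rfl, rfl⟩
    exact hexc rfl
  · push Not at huniform
    obtain ⟨l, hl, hlk⟩ := huniform
    exact hlk.lt_or_gt.elim (sum_le_bell_of_mem_of_lt hpos hl hk)
      (sum_le_bell_of_mem_of_lt hpos hk hl)

end Bell

theorem stmt_0_general {α : Type*} [DecidableEq α] {S : Finset α} {m : Multiset ℕ}
    (hpos : ∀ k ∈ m, 0 < k) (hsum : m.sum = #S) (hcard_ne_one : m.card ≠ 1)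
    (hcard_ne : m.card ≠ #S) (hexc : m ≠ {2, 2}) : #S ≤ #(partitionsOfShape S m) := by
  rw [card_partitionsOfShape hpos hsum, ← hsum]
  exact sum_le_bell hpos hcard_ne_one (hsum ▸ hcard_ne) hexc

/-- Lemma 4.3 (partition-number lemma): the number of unordered set partitions of
`{1,…,n}` into blocks of sizes `a_1,…,a_s` is at least `n`, unless `s = 1`, `s = n`,
or `n = 4, s = 2, a_1 = a_2 = 2`. -/
theorem stmt_0 (n s : ℕ) (hn : 1 ≤ n) (hs1 : 1 ≤ s) (hsn : s ≤ n)
    (a : Fin s → ℕ) (hpos : ∀ i, 0 < a i) (hsum : ∑ i, a i = n)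
    (hs_ne_one : s ≠ 1) (hs_ne_n : s ≠ n)
    (hexc : ¬(n = 4 ∧ s = 2 ∧ ∀ i, a i = 2)) :
    n ≤ Set.ncard {P : Finpartition (Finset.univ : Finset (Fin n)) |
        Multiset.map Finset.card P.parts.val = Multiset.map a Finset.univ.val} := by
  have hne : univ.val.map a ≠ {2, 2} := fun h ↦ hexc
    ⟨hsum.symm.trans (congrArg Multiset.sum h), by simpa using congrArg Multiset.card h,
      fun i ↦ by simpa [h] using Multiset.mem_map_of_mem a (mem_univ_val i)⟩
  have := stmt_0_general (S := (univ : Finset (Fin n))) (m := univ.val.map a)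
    (by simpa using hpos) (by rwa [card_fin]) (by simpa using hs_ne_one)
    (by simpa using hs_ne_n) hne
  simpa [partitionsOfShape, ← Set.ncard_coe_finset] using this
end

section
/- Let K = (V, E) be a finite simple graph having at least s connected components, where s ≥ 1, and let 𝒞 be a finite multiset of colors such that the cardinality of 𝒞 counted with multiplicity is at least |V| and the number of distinct elements of 𝒞 is at least |V| − s + 1. Then there exists a coloring of K by 𝒞, i.e. a map φ : V → colors such that the multiset image {φ(v) : v ∈ V} is a sub-multiset of 𝒞 (each element of 𝒞 is used no more often than its multiplicity in 𝒞) and φ(u) ≠ φ(v) whenever u and v are adjacent in K. -/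
/-!
Let `c` send a vertex to its component. Choose one representative in every component but one, and
reserve a set `T` of as many distinct colors as there are other vertices. The representatives
receive arbitrary leftover colors; the other vertices are then matched injectively into `T`, each
avoiding the color of the representative of its own component, so that even vertices that merely
share a component get different colors. Hall's condition holds for this matching: every vertex has
at most one forbidden color, so only the set of all non-representatives could violate it, and that
set contains a vertex of the omitted component, for which no color is forbidden.
-/

open Finset

section

variable {ι α β : Type*}

theorem exists_injOn_mem_of_card_le_card_add_one [DecidableEq α] [Nonempty α]
    {s : Finset ι} {t : ι → Finset α} (hcard : ∀ i ∈ s, #s ≤ #(t i) + 1)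
    (hunion : #s ≤ #(s.biUnion t)) :
    ∃ f : ι → α, Set.InjOn f s ∧ ∀ i ∈ s, f i ∈ t i := by
  classical
  have hall (u : Finset s) : #u ≤ #(u.biUnion fun i ↦ t i) := by
    obtain rfl | hu := eq_or_ne u univ
    · rwa [univ_eq_attach, card_attach, attach_biUnion]
    obtain rfl | ⟨i, hi⟩ := u.eq_empty_or_nonempty
    · simp only [card_empty, zero_le]
    have hlt : #u < #s := by
      simpa only [Fintype.card_coe] using (card_lt_iff_ne_univ u).2 hu
    have hle : #(t i) ≤ #(u.biUnion fun i ↦ t i) :=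
      card_le_card (subset_biUnion_of_mem (fun i : s ↦ t i) hi)
    have := hcard i i.2
    omega
  obtain ⟨g, hg, hgt⟩ := (all_card_le_biUnion_card_iff_exists_injective fun i : s ↦ t i).1 hall
  let f := Function.extend Subtype.val g fun _ ↦ Classical.arbitrary α
  have hf (i : s) : f i = g i := Subtype.val_injective.extend_apply ..
  refine ⟨f, fun i hi j hj hij ↦ ?_, fun i hi ↦ hf ⟨i, hi⟩ ▸ hgt ⟨i, hi⟩⟩
  exact congrArg Subtype.val (hg ((hf ⟨i, hi⟩).symm.trans (hij.trans (hf ⟨j, hj⟩))))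

theorem exists_map_val_le_of_card_le [Nonempty β] {s : Finset α} {M : Multiset β}
    (h : #s ≤ M.card) : ∃ f : α → β, s.val.map f ≤ M := by
  classical
  induction s using Finset.induction_on generalizing M with
  | empty => exact ⟨fun _ ↦ Classical.arbitrary β, by simp⟩
  | insert a s ha ih =>
    rw [card_insert_of_notMem ha] at h
    obtain ⟨x, hx⟩ := Multiset.card_pos_iff_exists_mem.1 (by omega : 0 < M.card)
    obtain ⟨N, rfl⟩ := Multiset.exists_cons_of_mem hx
    obtain ⟨f, hf⟩ := ih (M := N) (by simpa using h)
    refine ⟨Function.update f a x, ?_⟩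
    have hmap : s.val.map (Function.update f a x) = s.val.map f :=
      Multiset.map_congr rfl fun b hb ↦ Function.update_of_ne (ne_of_mem_of_not_mem hb ha) ..
    rw [insert_val_of_notMem ha, Multiset.map_cons, Function.update_self, hmap]
    exact Multiset.cons_le_cons x hf

theorem map_val_le_val_of_injOn {s : Finset α} {t : Finset β} {f : α → β}
    (hinj : Set.InjOn f s) (hmem : Set.MapsTo f s t) : s.val.map f ≤ t.val := by
  classical
  rw [← image_val_of_injOn hinj, val_le_iff]
  exact image_subset_iff.2 hmem

theorem map_piecewise_univ_val [Fintype α] [DecidableEq α] (s : Finset α) (f g : α → β) :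
    univ.val.map (s.piecewise f g) = s.val.map f + sᶜ.val.map g := by
  have huniv : (univ : Finset α).val = s.val + sᶜ.val := by
    rw [← union_compl s, ← disjUnion_eq_union _ _ disjoint_compl_right]
    rfl
  rw [huniv, Multiset.map_add]
  congr 1 <;> refine Multiset.map_congr rfl fun a ha ↦ ?_
  · exact s.piecewise_eq_of_mem f g ha
  · exact s.piecewise_eq_of_notMem f g (mem_compl.1 ha)

theorem exists_injOn_ne_card_add_one_of_surjective [Fintype ι] {c : α → ι}
    (hc : Function.Surjective c) (i₀ : ι) :
    ∃ R : Finset α, Set.InjOn c R ∧ (∀ a ∈ R, c a ≠ i₀) ∧ #R + 1 = Fintype.card ι := by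
  classical
  refine ⟨(univ.erase i₀).map ⟨Function.surjInv hc, Function.injective_surjInv hc⟩, ?_, ?_, ?_⟩
  · rw [coe_map]
    rintro _ ⟨i, -, rfl⟩ _ ⟨j, -, rfl⟩ hij
    simp only [Function.Embedding.coeFn_mk, Function.surjInv_eq] at hij ⊢
    rw [hij]
  · simp only [forall_mem_map, Function.Embedding.coeFn_mk, Function.surjInv_eq]
    exact fun i hi ↦ ne_of_mem_erase hi
  · rw [card_map, card_erase_add_one (mem_univ i₀), card_univ]

end

section

variable {V ι C : Type*} [Fintype V] [DecidableEq V] {c : V → ι} {R : Finset V} {v₀ : V}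

theorem exists_injOn_compl_ne_of_injOn {T : Finset C} (hR : Set.InjOn c R)
    (hv₀ : ∀ u ∈ R, c u ≠ c v₀) (hT : #Rᶜ ≤ #T) (ψ : V → C) :
    ∃ f : V → C, Set.InjOn f ↑Rᶜ ∧ Set.MapsTo f ↑Rᶜ T ∧
      ∀ u ∈ R, ∀ v ∈ Rᶜ, c u = c v → ψ u ≠ f v := by
  classical
  let allowed (v : V) : Finset C := T \ {u ∈ R | c u = c v}.image ψ
  have hallowed (v : V) : #T ≤ #(allowed v) + 1 := by
    have hforbidden : #({u ∈ R | c u = c v}.image ψ) ≤ 1 := by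
      refine card_image_le.trans (card_le_one.2 fun a ha b hb ↦ ?_)
      rw [mem_filter] at ha hb
      exact hR ha.1 hb.1 (ha.2.trans hb.2.symm)
    exact tsub_le_iff_right.1 <|
      (Nat.sub_le_sub_left hforbidden _).trans (le_card_sdiff _ T)
  have hfree : allowed v₀ = T := by
    simp only [allowed, filter_false_of_mem hv₀, image_empty, sdiff_empty]
  have hv₀R : v₀ ∈ Rᶜ := mem_compl.2 fun h ↦ hv₀ v₀ h rfl
  have hunion : #Rᶜ ≤ #(Rᶜ.biUnion allowed) :=
    hT.trans (hfree ▸ card_le_card (subset_biUnion_of_mem allowed hv₀R))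
  have : Nonempty C := ⟨ψ v₀⟩
  obtain ⟨f, hf, hmem⟩ :=
    exists_injOn_mem_of_card_le_card_add_one (fun v _ ↦ hT.trans (hallowed v)) hunion
  refine ⟨f, hf, fun v hv ↦ (mem_sdiff.1 (hmem v hv)).1, fun u hu v hv huv heq ↦ ?_⟩
  exact (mem_sdiff.1 (hmem v hv)).2 (mem_image.2 ⟨u, mem_filter.2 ⟨hu, huv⟩, heq⟩)

theorem exists_map_val_le_injOn_fibers [DecidableEq C] {M : Multiset C} (hR : Set.InjOn c R)
    (hv₀ : ∀ u ∈ R, c u ≠ c v₀) (hsize : Fintype.card V ≤ M.card)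
    (hcolors : #Rᶜ ≤ #M.toFinset) :
    ∃ φ : V → C, univ.val.map φ ≤ M ∧ ∀ i, Set.InjOn φ (c ⁻¹' {i}) := by
  obtain ⟨T, hTM, hT⟩ := exists_subset_card_eq hcolors
  have hTle : T.val ≤ M := (val_le_iff.2 hTM).trans (Multiset.dedup_le M)
  have hleft : #R ≤ (M - T.val).card := by
    rw [Multiset.card_sub hTle, card_val, hT]
    have := card_add_card_compl R
    omega
  have hv₀R : v₀ ∈ Rᶜ := mem_compl.2 fun h ↦ hv₀ v₀ h rfl
  obtain ⟨x, -⟩ := card_pos.1 ((card_pos.2 ⟨v₀, hv₀R⟩).trans_le hcolors)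
  have : Nonempty C := ⟨x⟩
  obtain ⟨ψ, hψ⟩ := exists_map_val_le_of_card_le hleft
  obtain ⟨f, hinj, hmem, hne⟩ := exists_injOn_compl_ne_of_injOn hR hv₀ hT.ge ψ
  refine ⟨R.piecewise ψ f, ?_, ?_⟩
  · calc univ.val.map (R.piecewise ψ f)
        = R.val.map ψ + Rᶜ.val.map f := map_piecewise_univ_val R ψ f
      _ ≤ (M - T.val) + T.val := add_le_add hψ (map_val_le_val_of_injOn hinj hmem)
      _ = M := tsub_add_cancel_of_le hTle
  · rintro i u rfl v hvu huv
    have hcuv : c u = c v := hvu.symm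
    by_cases hu : u ∈ R <;> by_cases hv : v ∈ R
    · exact hR hu hv hcuv
    · rw [piecewise_eq_of_mem _ _ _ hu, piecewise_eq_of_notMem _ _ _ hv] at huv
      exact absurd huv (hne u hu v (mem_compl.2 hv) hcuv)
    · rw [piecewise_eq_of_notMem _ _ _ hu, piecewise_eq_of_mem _ _ _ hv] at huv
      exact absurd huv.symm (hne v hv u (mem_compl.2 hu) hcuv.symm)
    · rw [piecewise_eq_of_notMem _ _ _ hu, piecewise_eq_of_notMem _ _ _ hv] at huv
      exact hinj (mem_compl.2 hu) (mem_compl.2 hv) huv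

end

/-- Lemma 4.4 (coloring lemma): if a finite simple graph `K` has at least `s ≥ 1`
connected components, and `𝒞` is a multiset of colors of total size at least `|V|`
with at least `|V| - s + 1` distinct colors, then there is a coloring of `K` by `𝒞`:
a map `φ : V → C` using each color no more often than its multiplicity in `𝒞` and
giving adjacent vertices different colors. -/
theorem stmt_1 {V C : Type*} [Fintype V] [DecidableEq C]
    (K : SimpleGraph V)
    (s : ℕ) (hs : 1 ≤ s) (hcomp : s ≤ Nat.card K.ConnectedComponent)
    (𝒞 : Multiset C)
    (hsize : Fintype.card V ≤ Multiset.card 𝒞)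
    (hcolors : Fintype.card V - s + 1 ≤ 𝒞.toFinset.card) :
    ∃ φ : V → C,
      Multiset.map φ (Finset.univ : Finset V).val ≤ 𝒞 ∧
      ∀ u v : V, K.Adj u v → φ u ≠ φ v := by
  classical
  have : Nonempty K.ConnectedComponent := (Nat.card_pos_iff.1 (hs.trans hcomp)).1
  obtain ⟨v₀⟩ : Nonempty V := this.map Quot.out
  have hsurj : Function.Surjective K.connectedComponentMk := Quot.mk_surjective
  obtain ⟨R, hR, hv₀, hcard⟩ :=
    exists_injOn_ne_card_add_one_of_surjective hsurj (K.connectedComponentMk v₀)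
  have hcompl : #Rᶜ ≤ #𝒞.toFinset := by
    rw [Nat.card_eq_fintype_card] at hcomp
    rw [card_compl]
    omega
  obtain ⟨φ, hφ, hinj⟩ := exists_map_val_le_injOn_fibers hR hv₀ hsize hcompl
  refine ⟨φ, hφ, fun u v huv heq ↦ huv.ne (hinj (K.connectedComponentMk v) ?_ rfl heq)⟩
  exact SimpleGraph.ConnectedComponent.sound huv.reachable
end

section
/- Let Y ⊆ ℂ^{n+1} be the common zero set of a (possibly empty) family of homogeneous polynomials each of which is invariant. Let ℓ ≥ 1 and let g be a homogeneous polynomial of degree ℓ whose restriction to Y is not S_{n+1}-invariant, i.e. there exist τ ∈ S_{n+1} and y ∈ Y with (τ·g)(y) ≠ g(y). Let K be a finite simple graph on the vertex set {0, …, n}. Then there exist a finite simple graph K′ on {0, …, n} containing K as a subgraph with c(K′) ≥ c(K) − 1, and a homogeneous polynomial g′ of degree ℓ − 1 whose restriction to Y is not identically zero, such that Bs(f_K · g) ⊆ Bs(f_{K′} · g′). -/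
open MvPolynomial

/-- `Bs h` is the common zero set in `ℂ^{n+1}` of all the `S_{n+1}`-translates of the
polynomial `h`, where `S_{n+1}` acts by permuting the variables. -/
def Bs {n : ℕ} (h : MvPolynomial (Fin (n + 1)) ℂ) : Set (Fin (n + 1) → ℂ) :=
  {p | ∀ σ : Equiv.Perm (Fin (n + 1)), eval p (rename (⇑σ) h) = 0}

open scoped Classical in
/-- For a finite simple graph `K` on the vertex set `{0,…,n}`, `fK K` is the product
`∏_{{i,j} ∈ E(K)} (x_i − x_j)`, with one factor per edge, each edge ordered so that
`i < j` (a fixed choice of ordering of each edge). -/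
noncomputable def fK {n : ℕ} (K : SimpleGraph (Fin (n + 1))) :
    MvPolynomial (Fin (n + 1)) ℂ :=
  ∏ p ∈ Finset.univ.filter
      (fun p : Fin (n + 1) × Fin (n + 1) => K.Adj p.1 p.2 ∧ p.1 < p.2),
    (X p.1 - X p.2)

/-!
The base locus of `f_K * g` consists of the points `p` such that `g` vanishes at every rearrangement
of `p` which properly colours `K`. Transpositions generate the symmetric group and `Y` is stable
under permutations, so `g` and its translate by some transposition `s = (i j)` differ somewhere
on `Y`. Since `s` is the identity modulo `x_i - x_j`, we can write `g - s g = (x_i - x_j) g'`.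
Take `K'` to be `K ∪ s K ∪ {ij}`. If `z` properly colours `K'`, then `z` and `s z` properly
colour `K` and `z_i ≠ z_j`, so the vanishing of `g` at `z` and `s z` forces that of `g'` at `z`.
Finally, each edge of `s K` joins vertices that are already connected in `K ∪ {ij}`, so passing from
`K` to `K'` loses no more components than adding one edge does.
-/

section ConnectedComponent

variable {V β : Type*} {G H : SimpleGraph V}

theorem eq_of_reachable_of_adj {φ : V → β} (hφ : ∀ a b, G.Adj a b → φ a = φ b) {a b : V}
    (hab : G.Reachable a b) : φ a = φ b := by
  obtain ⟨w⟩ := hab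
  induction w with
  | nil => rfl
  | cons hadj _ ih => exact (hφ _ _ hadj).trans ih

theorem ncard_range_le_card_connectedComponent [Finite G.ConnectedComponent] {φ : V → β}
    (hφ : ∀ a b, G.Adj a b → φ a = φ b) :
    (Set.range φ).ncard ≤ Nat.card G.ConnectedComponent := by
  let Φ : G.ConnectedComponent → β :=
    Quot.lift φ fun _ _ ↦ eq_of_reachable_of_adj hφ
  have hrange : Set.range φ = Set.range Φ := Quot.mk_surjective.range_comp Φ
  rw [hrange, ← Nat.card_coe_set_eq]
  exact Finite.card_range_le Φ

theorem card_connectedComponent_le_of_adj_imp_reachable [Finite H.ConnectedComponent]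
    (h : ∀ a b, H.Adj a b → G.Reachable a b) :
    Nat.card G.ConnectedComponent ≤ Nat.card H.ConnectedComponent := by
  have hrange : Set.range G.connectedComponentMk = Set.univ := Quot.mk_surjective.range_eq
  rw [← Set.ncard_univ, ← hrange]
  exact ncard_range_le_card_connectedComponent fun a b hab ↦ Quot.sound (h a b hab)

theorem card_connectedComponent_le_card_sup_edge_add_one [Finite V] (G : SimpleGraph V) (i j : V) :
    Nat.card G.ConnectedComponent ≤
      Nat.card (G ⊔ SimpleGraph.edge i j).ConnectedComponent + 1 := by
  classical
  let c := G.connectedComponentMk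
  -- Redirecting the component of `j` to that of `i` gives a map constant along `ij` as well.
  let φ : V → G.ConnectedComponent := fun v ↦ if c v = c j then c i else c v
  have hφ : ∀ a b, (G ⊔ SimpleGraph.edge i j).Adj a b → φ a = φ b := by
    intro a b hab
    rcases hab with hG | hedge
    · have hc : c a = c b := SimpleGraph.ConnectedComponent.connectedComponentMk_eq_of_adj hG
      simp only [φ, hc]
    · rcases ((SimpleGraph.edge_adj ..).1 hedge).1 with ⟨rfl, rfl⟩ | ⟨rfl, rfl⟩ <;> simp [φ]
  have hcover : (Set.univ : Set G.ConnectedComponent) ⊆ insert (c j) (Set.range φ) := by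
    rintro ⟨v⟩ -
    by_cases hv : c v = c j
    · exact Or.inl hv
    · exact Or.inr ⟨v, if_neg hv⟩
  calc Nat.card G.ConnectedComponent = (Set.univ : Set G.ConnectedComponent).ncard :=
        (Set.ncard_univ _).symm
    _ ≤ (insert (c j) (Set.range φ)).ncard := Set.ncard_le_ncard hcover
    _ ≤ (Set.range φ).ncard + 1 := Set.ncard_insert_le _ _
    _ ≤ Nat.card (G ⊔ SimpleGraph.edge i j).ConnectedComponent + 1 :=
        Nat.add_le_add_right (ncard_range_le_card_connectedComponent hφ) 1

end ConnectedComponent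

section SwapAugment

variable {σ α : Type*}

/-- `ProperlyColors K q` says that `q` is a proper colouring of `K`. This is the unbundled form of
`SimpleGraph.Coloring`, convenient for colourings given by the coordinates of a point. -/
def ProperlyColors (K : SimpleGraph σ) (q : σ → α) : Prop :=
  ∀ ⦃a b⦄, K.Adj a b → q a ≠ q b

variable [DecidableEq σ]

/-- The graph obtained from `K` by adding the image of `K` under the transposition `(i j)` and the
edge `ij`; it is the `K'` of the main theorem. The image is written as a `comap`, the transposition
being its own inverse. -/
def swapAugment (K : SimpleGraph σ) (i j : σ) : SimpleGraph σ :=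
  K ⊔ K.comap (Equiv.swap i j) ⊔ SimpleGraph.edge i j

theorem le_swapAugment (K : SimpleGraph σ) (i j : σ) : K ≤ swapAugment K i j :=
  le_sup_left.trans le_sup_left

theorem properlyColors_swapAugment_iff {K : SimpleGraph σ} {i j : σ} (hij : i ≠ j) {q : σ → α} :
    ProperlyColors (swapAugment K i j) q ↔
      ProperlyColors K q ∧ ProperlyColors K (q ∘ Equiv.swap i j) ∧ q i ≠ q j := by
  constructor
  · intro h
    refine ⟨fun a b hab ↦ h (Or.inl (Or.inl hab)), fun a b hab ↦ ?_, ?_⟩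
    · exact h (Or.inl (Or.inr (by simpa using hab)))
    · exact h (Or.inr (by simp [SimpleGraph.edge_adj, hij]))
  · rintro ⟨hK, hswap, hne⟩ a b ((hab | hab) | hab)
    · exact hK hab
    · simpa using hswap hab
    · rcases ((SimpleGraph.edge_adj ..).1 hab).1 with ⟨rfl, rfl⟩ | ⟨rfl, rfl⟩
      exacts [hne, hne.symm]

theorem reachable_sup_edge_swap (K : SimpleGraph σ) (i j a : σ) :
    (K ⊔ SimpleGraph.edge i j).Reachable a (Equiv.swap i j a) := by
  have hij : (K ⊔ SimpleGraph.edge i j).Reachable i j := by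
    rcases eq_or_ne i j with rfl | hne
    · rfl
    · exact SimpleGraph.Adj.reachable (Or.inr (by simp [SimpleGraph.edge_adj, hne]))
  rw [Equiv.swap_apply_def]
  split_ifs with hi hj
  · exact hi ▸ hij
  · exact hj ▸ hij.symm
  · rfl

theorem reachable_sup_edge_of_adj_swapAugment {K : SimpleGraph σ} {i j a b : σ}
    (hab : (swapAugment K i j).Adj a b) : (K ⊔ SimpleGraph.edge i j).Reachable a b := by
  rcases hab with (hK | hswap) | hedge
  · exact SimpleGraph.Adj.reachable (Or.inl hK)
  · have hmid : (K ⊔ SimpleGraph.edge i j).Adj (Equiv.swap i j a) (Equiv.swap i j b) :=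
      Or.inl hswap
    exact (reachable_sup_edge_swap K i j a).trans
      (hmid.reachable.trans (reachable_sup_edge_swap K i j b).symm)
  · exact SimpleGraph.Adj.reachable (Or.inr hedge)

theorem card_connectedComponent_le_card_swapAugment_add_one [Finite σ] (K : SimpleGraph σ)
    (i j : σ) :
    Nat.card K.ConnectedComponent ≤ Nat.card (swapAugment K i j).ConnectedComponent + 1 :=
  (card_connectedComponent_le_card_sup_edge_add_one K i j).trans <| Nat.add_le_add_right
    (card_connectedComponent_le_of_adj_imp_reachable
      fun _ _ ↦ reachable_sup_edge_of_adj_swapAugment) 1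

end SwapAugment

section Polynomial

variable {σ R : Type*}

theorem algHom_sub_algHom_mem [CommSemiring R] {A : Type*} [CommRing A] [Algebra R A]
    {φ ψ : MvPolynomial σ R →ₐ[R] A} {I : Ideal A} (h : ∀ s, φ (X s) - ψ (X s) ∈ I)
    (p : MvPolynomial σ R) : φ p - ψ p ∈ I := by
  have hcongr : (Ideal.Quotient.mkₐ R I).comp φ = (Ideal.Quotient.mkₐ R I).comp ψ :=
    algHom_ext fun s ↦ Ideal.Quotient.eq.2 (h s)
  exact Ideal.Quotient.eq.1 (DFunLike.congr_fun hcongr p)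

theorem X_sub_X_dvd_sub_rename_swap [CommRing R] [DecidableEq σ] (i j : σ)
    (g : MvPolynomial σ R) : X i - X j ∣ g - rename (Equiv.swap i j) g := by
  rw [← Ideal.mem_span_singleton]
  refine algHom_sub_algHom_mem (φ := AlgHom.id R _) (fun s ↦ ?_) g
  rw [Ideal.mem_span_singleton, AlgHom.id_apply, rename_X, Equiv.swap_apply_def]
  split_ifs with hi hj
  · rw [hi]
  · rw [hj, dvd_sub_comm]
  · simp

theorem homogeneousComponent_add_mul_of_isHomogeneous [CommSemiring R] {a : MvPolynomial σ R}
    {m : ℕ} (ha : a.IsHomogeneous m) (k : ℕ) (q : MvPolynomial σ R) :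
    homogeneousComponent (m + k) (a * q) = a * homogeneousComponent k q := by
  classical
  let _ : GradedAlgebra (homogeneousSubmodule σ R) := gradedAlgebra
  have h := DirectSum.coe_decompose_mul_add_of_left_mem (homogeneousSubmodule σ R)
    (j := k) (b := q) ((mem_homogeneousSubmodule ..).2 ha)
  have happly (p : MvPolynomial σ R) (d : ℕ) :
      (DirectSum.decompose (homogeneousSubmodule σ R) p d : MvPolynomial σ R) =
        homogeneousComponent d p := decomposition.decompose'_apply p d
  simpa only [happly] using h

theorem exists_isHomogeneous_sub_rename_swap_eq [CommRing R] [DecidableEq σ] (i j : σ) {m : ℕ}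
    {g : MvPolynomial σ R} (hg : g.IsHomogeneous (m + 1)) :
    ∃ g' : MvPolynomial σ R, g'.IsHomogeneous m ∧
      g - rename (Equiv.swap i j) g = (X i - X j) * g' := by
  obtain ⟨q, hq⟩ := X_sub_X_dvd_sub_rename_swap i j g
  have hlin : (X i - X j : MvPolynomial σ R).IsHomogeneous 1 :=
    (isHomogeneous_X R i).sub (isHomogeneous_X R j)
  have hdiff : (g - rename (Equiv.swap i j) g).IsHomogeneous (1 + m) :=
    add_comm m 1 ▸ hg.sub hg.rename_isHomogeneous
  refine ⟨homogeneousComponent m q, homogeneousComponent_isHomogeneous m q, ?_⟩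
  rw [← homogeneousComponent_add_mul_of_isHomogeneous hlin, ← hq,
    homogeneousComponent_of_mem hdiff, if_pos rfl]

theorem eval_comp_perm_of_isSymmetric [CommSemiring R] {f : MvPolynomial σ R} (hf : f.IsSymmetric)
    (p : σ → R) (π : Equiv.Perm σ) : eval (p ∘ π) f = eval p f := by
  rw [← eval_rename, hf π]

end Polynomial

theorem exists_swap_comp_ne {σ α β : Type*} [Finite σ] [DecidableEq σ] {Y : Set (σ → α)}
    (hY : ∀ y ∈ Y, ∀ π : Equiv.Perm σ, y ∘ π ∈ Y) {F : (σ → α) → β}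
    (hF : ∃ π : Equiv.Perm σ, ∃ y ∈ Y, F (y ∘ π) ≠ F y) :
    ∃ i j, i ≠ j ∧ ∃ y ∈ Y, F (y ∘ Equiv.swap i j) ≠ F y := by
  by_contra! hswap
  obtain ⟨π, y, hy, hne⟩ := hF
  apply hne
  clear hne
  induction π using Equiv.Perm.swap_induction_on generalizing y with
  | one => rfl
  | swap_mul π i j hij ih =>
    exact (ih _ (hY y hy (Equiv.swap i j))).trans (hswap i j hij y hy)

section ColorBaseLocus

variable {σ R : Type*}

/-- The points `p` such that `g` vanishes at every permutation of `p` which properly colours `K`.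
For `R = ℂ` and `σ = Fin (n + 1)` this is `Bs (fK K * g)`, see `Bs_fK_mul`; unlike `fK K`, it does
not depend on an orientation of the edges and makes sense for any set of variables. -/
def colorBaseLocus [CommSemiring R] (K : SimpleGraph σ) (g : MvPolynomial σ R) : Set (σ → R) :=
  {p | ∀ π : Equiv.Perm σ, ProperlyColors K (p ∘ π) → eval (p ∘ π) g = 0}

theorem colorBaseLocus_subset_colorBaseLocus_swapAugment [CommRing R] [NoZeroDivisors R]
    [DecidableEq σ] {i j : σ} (hij : i ≠ j) {g g' : MvPolynomial σ R}
    (hg' : g - rename (Equiv.swap i j) g = (X i - X j) * g') (K : SimpleGraph σ) :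
    colorBaseLocus K g ⊆ colorBaseLocus (swapAugment K i j) g' := by
  intro p hp π hπ
  obtain ⟨hK, hswap, hne⟩ := (properlyColors_swapAugment_iff hij).1 hπ
  have hzero : eval (p ∘ π) g = 0 := hp π hK
  have hzero_swap : eval ((p ∘ π) ∘ Equiv.swap i j) g = 0 := hp (π * Equiv.swap i j) hswap
  have heval := congrArg (eval (p ∘ π)) hg'
  simp only [map_sub, map_mul, eval_X, eval_rename, hzero, hzero_swap, sub_zero] at heval
  exact (mul_eq_zero.1 heval.symm).resolve_left (sub_ne_zero.2 hne)

theorem stmt_2_general [Finite σ] [CommRing R] [NoZeroDivisors R] {Y : Set (σ → R)}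
    (hY : ∀ y ∈ Y, ∀ π : Equiv.Perm σ, y ∘ π ∈ Y) {m : ℕ} {g : MvPolynomial σ R}
    (hg : g.IsHomogeneous (m + 1))
    (hgni : ∃ τ : Equiv.Perm σ, ∃ y ∈ Y, eval y (rename τ g) ≠ eval y g) (K : SimpleGraph σ) :
    ∃ (K' : SimpleGraph σ) (g' : MvPolynomial σ R),
      K ≤ K' ∧
      Nat.card K.ConnectedComponent ≤ Nat.card K'.ConnectedComponent + 1 ∧
      g'.IsHomogeneous m ∧
      (∃ y ∈ Y, eval y g' ≠ 0) ∧
      colorBaseLocus K g ⊆ colorBaseLocus K' g' := by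
  classical
  simp only [eval_rename] at hgni
  obtain ⟨i, j, hij, y, hy, hne⟩ := exists_swap_comp_ne (F := fun z ↦ eval z g) hY hgni
  obtain ⟨g', hg'hom, hg'⟩ := exists_isHomogeneous_sub_rename_swap_eq i j hg
  refine ⟨swapAugment K i j, g', le_swapAugment K i j,
    card_connectedComponent_le_card_swapAugment_add_one K i j, hg'hom, ⟨y, hy, fun hzero ↦ ?_⟩,
    colorBaseLocus_subset_colorBaseLocus_swapAugment hij hg' K⟩
  have heval := congrArg (eval y) hg'
  rw [map_sub, map_mul, hzero, mul_zero, sub_eq_zero, eval_rename] at heval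
  exact hne heval.symm

end ColorBaseLocus

theorem eval_fK_ne_zero_iff {n : ℕ} (K : SimpleGraph (Fin (n + 1))) (q : Fin (n + 1) → ℂ) :
    eval q (fK K) ≠ 0 ↔ ProperlyColors K q := by
  classical
  simp only [fK, map_prod, Finset.prod_ne_zero_iff, Finset.mem_filter, Finset.mem_univ, true_and,
    map_sub, eval_X, sub_ne_zero, Prod.forall]
  constructor
  · intro h a b hab
    rcases hab.ne.lt_or_gt with hlt | hgt
    · exact h a b ⟨hab, hlt⟩
    · exact (h b a ⟨hab.symm, hgt⟩).symm
  · exact fun h a b hab ↦ h hab.1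

theorem Bs_fK_mul {n : ℕ} (K : SimpleGraph (Fin (n + 1))) (g : MvPolynomial (Fin (n + 1)) ℂ) :
    Bs (fK K * g) = colorBaseLocus K g := by
  ext p
  simp only [Bs, colorBaseLocus, Set.mem_ofPred_eq, eval_rename, map_mul, mul_eq_zero,
    ← eval_fK_ne_zero_iff, ne_eq, or_iff_not_imp_left]

/-- Lemma 4.6: given an intersection `Y` of invariant hypersurfaces, a homogeneous
polynomial `g` of degree `ℓ ≥ 1` whose restriction to `Y` is not `S_{n+1}`-invariant,
and a graph `K` on `{0,…,n}`, there exist a graph `K' ⊇ K` with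
`c(K') ≥ c(K) − 1` and a homogeneous polynomial `g'` of degree `ℓ − 1` not vanishing
identically on `Y` with `Bs(f_K · g) ⊆ Bs(f_{K'} · g')`. -/
theorem stmt_2 (n : ℕ) (hn : 1 ≤ n)
    (F : Set (MvPolynomial (Fin (n + 1)) ℂ))
    (hF : ∀ f ∈ F, (∃ k : ℕ, f.IsHomogeneous k) ∧
      ∀ σ : Equiv.Perm (Fin (n + 1)), rename (⇑σ) f = f)
    (Y : Set (Fin (n + 1) → ℂ)) (hY : Y = {p | ∀ f ∈ F, eval p f = 0})
    (ℓ : ℕ) (hℓ : 1 ≤ ℓ)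
    (g : MvPolynomial (Fin (n + 1)) ℂ) (hg : g.IsHomogeneous ℓ)
    (hgni : ∃ τ : Equiv.Perm (Fin (n + 1)), ∃ y ∈ Y,
      eval y (rename (⇑τ) g) ≠ eval y g)
    (K : SimpleGraph (Fin (n + 1))) :
    ∃ (K' : SimpleGraph (Fin (n + 1))) (g' : MvPolynomial (Fin (n + 1)) ℂ),
      K ≤ K' ∧
      Nat.card K.ConnectedComponent - 1 ≤ Nat.card K'.ConnectedComponent ∧
      g'.IsHomogeneous (ℓ - 1) ∧
      (∃ y ∈ Y, eval y g' ≠ 0) ∧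
      Bs (fK K * g) ⊆ Bs (fK K' * g') := by
  have hYperm : ∀ y ∈ Y, ∀ π : Equiv.Perm (Fin (n + 1)), y ∘ π ∈ Y := by
    subst hY
    exact fun y hy π f hf ↦ (eval_comp_perm_of_isSymmetric (hF f hf).2 y π).trans (hy f hf)
  obtain ⟨m, rfl⟩ := Nat.exists_eq_add_of_le' hℓ
  simp only [Bs_fK_mul, Nat.sub_le_iff_le_add]
  exact stmt_2_general hYperm hg hgni K
end

section
/- Let e_3 = Σ_{0≤i<j<k≤4} x_i x_j x_k ∈ ℂ[x_0,…,x_4]. If v ∈ ℂ^5 satisfies ∂e_3/∂x_i(v) = 0 for all i ∈ {0,…,4} (equivalently, the second elementary symmetric polynomial of the four coordinates of v other than v_i vanishes for each i), then v has at most one nonzero coordinate. Consequently, the singular locus of the cubic threefold Y = {e_3 = 0} ⊂ ℙ^4 consists exactly of the five coordinate points P_0 = [1:0:0:0:0], …, P_4 = [0:0:0:0:1]. -/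
open MvPolynomial

/-- The third elementary symmetric polynomial
`e₃ = Σ_{0 ≤ i < j < k ≤ 4} x_i x_j x_k` in `ℂ[x₀,…,x₄]`. -/
noncomputable def e3 : MvPolynomial (Fin 5) ℂ :=
  ∑ t ∈ Finset.powersetCard 3 (Finset.univ : Finset (Fin 5)), ∏ j ∈ t, X j

/-!
At a point with coordinate multiset `s`, the `j`-th partial derivative of `e_{k+1}` is `e_k` of `s`
with the `j`-th coordinate removed. If all of these vanish and `n = #s ≠ k`, then summing them
gives `(n - k) e_k(s) = 0`, so `e_k(s) = 0`. Expanding `e_k(s)` along a nonzero coordinate `a`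
shows that `e_{k-1}` of `s` without `a` vanishes as well. Discarding the zero coordinates, which
changes no `e_i`, leaves either exactly `k - 1` coordinates or the same situation with `k - 1` in
place of `k`, so by induction fewer than `k` coordinates are nonzero. The cubic `e₃` is the case
`k = 2`.
-/

section MultisetEsymm

variable {R : Type*}

lemma multiset_esymm_zero [CommSemiring R] (s : Multiset R) : s.esymm 0 = 1 := by
  simp [Multiset.esymm]

lemma multiset_esymm_eq_zero_of_card_lt [CommSemiring R] {s : Multiset R} {k : ℕ}
    (h : s.card < k) : s.esymm k = 0 := by
  simp [Multiset.esymm, Multiset.powersetCard_eq_empty k h]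

lemma multiset_esymm_cons_succ [CommSemiring R] (a : R) (s : Multiset R) (k : ℕ) :
    (a ::ₘ s).esymm (k + 1) = s.esymm (k + 1) + a * s.esymm k := by
  simp [Multiset.esymm, Multiset.powersetCard_cons, Multiset.sum_map_mul_left]

lemma multiset_esymm_filter_ne_zero [CommSemiring R] [DecidableEq R] (s : Multiset R) (k : ℕ) :
    (s.filter (· ≠ 0)).esymm k = s.esymm k := by
  induction s using Multiset.induction_on generalizing k with
  | empty => rfl
  | cons a s ih =>
    cases k with
    | zero => simp only [multiset_esymm_zero]
    | succ k =>
      by_cases ha : a = 0 <;> simp [ha, multiset_esymm_cons_succ, ih]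

lemma multiset_esymm_filter_ne_zero_erase [CommSemiring R] [DecidableEq R] {s : Multiset R}
    {a : R} (ha : a ∈ s) (ha0 : a ≠ 0) (k : ℕ) :
    ((s.filter (· ≠ 0)).erase a).esymm k = (s.erase a).esymm k := by
  have filter_eq : s.filter (· ≠ 0) = a ::ₘ (s.erase a).filter (· ≠ 0) := by
    rw [← Multiset.filter_cons_of_pos (p := (· ≠ 0)) _ ha0, Multiset.cons_erase ha]
  rw [filter_eq, Multiset.erase_cons_head, multiset_esymm_filter_ne_zero]

lemma sum_map_multiset_esymm_erase [CommRing R] [DecidableEq R] (s : Multiset R) (k : ℕ) :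
    (s.map fun a ↦ (s.erase a).esymm k).sum = (s.card - k) * s.esymm k := by
  induction s using Multiset.induction_on generalizing k with
  | empty =>
    cases k with
    | zero => simp
    | succ k => simp [multiset_esymm_eq_zero_of_card_lt (s := (0 : Multiset R)) k.succ_pos]
  | cons a s ih =>
    cases k with
    | zero => simp [multiset_esymm_zero, add_comm]
    | succ k =>
      have erase_tail : ∀ b ∈ s, ((a ::ₘ s).erase b).esymm (k + 1) =
          (s.erase b).esymm (k + 1) + a * (s.erase b).esymm k := fun b hb ↦ by
        rw [Multiset.erase_cons_tail_of_mem hb, multiset_esymm_cons_succ]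
      rw [Multiset.map_cons, Multiset.sum_cons, Multiset.erase_cons_head,
        Multiset.map_congr rfl erase_tail, Multiset.sum_map_add, Multiset.sum_map_mul_left,
        ih, ih, multiset_esymm_cons_succ, Multiset.card_cons]
      push_cast
      ring

variable [CommRing R] [NoZeroDivisors R] [CharZero R] [DecidableEq R]

lemma multiset_esymm_eq_zero_of_forall_erase {s : Multiset R} {k : ℕ} (hk : s.card ≠ k)
    (h : ∀ a ∈ s, (s.erase a).esymm k = 0) : s.esymm k = 0 := by
  have hsum : ((s.card : R) - k) * s.esymm k = 0 := by
    rw [← sum_map_multiset_esymm_erase, Multiset.map_congr rfl h, Multiset.sum_map_zero]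
  exact (mul_eq_zero.mp hsum).resolve_left (sub_ne_zero.mpr (Nat.cast_injective.ne hk))

lemma multiset_esymm_erase_eq_zero_of_forall_succ {s : Multiset R} {k : ℕ} (hk : s.card ≠ k + 1)
    (h : ∀ a ∈ s, (s.erase a).esymm (k + 1) = 0) {a : R} (ha : a ∈ s) (ha0 : a ≠ 0) :
    (s.erase a).esymm k = 0 := by
  have expand := multiset_esymm_cons_succ a (s.erase a) k
  rw [Multiset.cons_erase ha, multiset_esymm_eq_zero_of_forall_erase hk h, h a ha,
    zero_add] at expand
  exact (mul_eq_zero.mp expand.symm).resolve_left ha0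

lemma card_filter_ne_zero_lt_of_forall_multiset_esymm_erase_eq_zero {s : Multiset R} {k : ℕ}
    (hk : s.card ≠ k) (h : ∀ a ∈ s, (s.erase a).esymm k = 0) :
    (s.filter (· ≠ 0)).card < k := by
  induction k generalizing s with
  | zero =>
    have esymm_zero : s.esymm 0 = 0 := multiset_esymm_eq_zero_of_forall_erase hk h
    exact absurd esymm_zero (by simp [multiset_esymm_zero])
  | succ k ih =>
    rcases eq_or_ne (s.filter (· ≠ 0)).card k with hcard | hcard
    · exact hcard.trans_lt k.lt_succ_self
    · have erase_filter : ∀ a ∈ s.filter (· ≠ 0), ((s.filter (· ≠ 0)).erase a).esymm k = 0 := by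
        intro a ha
        obtain ⟨has, ha0⟩ := Multiset.mem_filter.mp ha
        rw [multiset_esymm_filter_ne_zero_erase has ha0]
        exact multiset_esymm_erase_eq_zero_of_forall_succ hk h has ha0
      have filter_lt := ih hcard erase_filter
      simp only [Multiset.filter_filter, and_self] at filter_lt
      exact filter_lt.trans k.lt_succ_self

lemma forall_multiset_esymm_erase_eq_zero_iff {s : Multiset R} {k : ℕ} (hk : s.card ≠ k) :
    (∀ a ∈ s, (s.erase a).esymm k = 0) ↔ (s.filter (· ≠ 0)).card < k := by
  refine ⟨card_filter_ne_zero_lt_of_forall_multiset_esymm_erase_eq_zero hk, fun h a _ ↦ ?_⟩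
  rw [← multiset_esymm_filter_ne_zero]
  exact multiset_esymm_eq_zero_of_card_lt <|
    (Multiset.card_le_card (Multiset.filter_le_filter _ (s.erase_le a))).trans_lt h

end MultisetEsymm

section Pderiv

variable {σ R : Type*} [CommSemiring R]

lemma pderiv_multiset_esymm_map_X_of_notMem {j : σ} {s : Multiset σ} (hj : j ∉ s) (k : ℕ) :
    pderiv j ((s.map X).esymm k : MvPolynomial σ R) = 0 := by
  induction s using Multiset.induction_on generalizing k with
  | empty =>
    cases k with
    | zero => rw [multiset_esymm_zero, pderiv_one]
    | succ k => rw [multiset_esymm_eq_zero_of_card_lt k.succ_pos, map_zero]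
  | cons i s ih =>
    obtain ⟨hij, hjs⟩ : j ≠ i ∧ j ∉ s := by simpa using hj
    cases k with
    | zero => rw [multiset_esymm_zero, pderiv_one]
    | succ k =>
      simp [multiset_esymm_cons_succ, pderiv_X_of_ne hij.symm, ih hjs]

variable [Fintype σ]

lemma pderiv_esymm_succ [DecidableEq σ] (j : σ) (k : ℕ) :
    pderiv j (esymm σ R (k + 1)) = ((Finset.univ.erase j).val.map X).esymm k := by
  have hj : j ∉ (Finset.univ.erase j).val := Finset.notMem_erase j Finset.univ
  rw [esymm_eq_multiset_esymm, ← Multiset.cons_erase (Finset.mem_univ_val j),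
    ← Finset.erase_val, Multiset.map_cons, multiset_esymm_cons_succ, map_add, pderiv_mul,
    pderiv_X_self, pderiv_multiset_esymm_map_X_of_notMem hj,
    pderiv_multiset_esymm_map_X_of_notMem hj]
  ring

lemma eval_pderiv_esymm_succ [DecidableEq R] (v : σ → R) (j : σ) (k : ℕ) :
    eval v (pderiv j (esymm σ R (k + 1))) = ((Finset.univ.val.map v).erase (v j)).esymm k := by
  classical
  rw [pderiv_esymm_succ, ← Multiset.map_erase_of_mem v _ (Finset.mem_univ_val j),
    ← Finset.erase_val]
  simp only [Finset.esymm_map_val, map_sum, map_prod, eval_X]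

end Pderiv

lemma ncard_support_eq_card_filter {σ R : Type*} [Fintype σ] [Zero R] [DecidableEq R]
    (v : σ → R) :
    (Function.support v).ncard = ((Finset.univ.val.map v).filter (· ≠ 0)).card := by
  classical
  rw [Multiset.filter_map, Multiset.card_map, Set.ncard_eq_toFinset_card', ← Finset.filter_val,
    Finset.card_val]
  congr 1
  ext
  simp

lemma support_subsingleton_iff_exists_eq_single {σ R : Type*} [DecidableEq σ] [Zero R]
    {v : σ → R} (hv : v ≠ 0) :
    (Function.support v).Subsingleton ↔ ∃ (j : σ) (c : R), c ≠ 0 ∧ v = Pi.single j c := by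
  constructor
  · intro h
    obtain ⟨j, hj⟩ := Function.ne_iff.mp hv
    refine ⟨j, v j, hj, funext fun i ↦ ?_⟩
    rcases eq_or_ne i j with rfl | hij
    · rw [Pi.single_eq_same]
    · rw [Pi.single_eq_of_ne hij]
      exact Function.notMem_support.mp fun hi ↦ hij (h hi hj)
  · rintro ⟨j, c, -, rfl⟩
    exact Set.subsingleton_singleton.anti Pi.support_single_subset

theorem stmt_8_general {σ R : Type*} [Fintype σ] [CommRing R] [NoZeroDivisors R] [CharZero R]
    {k : ℕ} (hk : Fintype.card σ ≠ k) (v : σ → R) :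
    (∀ j, eval v (pderiv j (esymm σ R (k + 1))) = 0) ↔ (Function.support v).ncard < k := by
  classical
  have hcard : (Finset.univ.val.map v).card ≠ k := by simpa using hk
  rw [ncard_support_eq_card_filter, ← forall_multiset_esymm_erase_eq_zero_iff hcard]
  simp [eval_pderiv_esymm_succ]

/-- If all partial derivatives of `e₃` vanish at `v ∈ ℂ⁵`, then `v` has at most one
nonzero coordinate.  Consequently, the singular locus of the cubic threefold
`Y = {e₃ = 0} ⊂ ℙ⁴` consists exactly of the five coordinate points. -/
theorem stmt_8 :
    (∀ v : Fin 5 → ℂ, (∀ j : Fin 5, eval v (pderiv j e3) = 0) →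
      Set.Subsingleton {j : Fin 5 | v j ≠ 0}) ∧
    (∀ v : Fin 5 → ℂ, v ≠ 0 → eval v e3 = 0 →
      ((∀ j : Fin 5, eval v (pderiv j e3) = 0) ↔
        ∃ (j : Fin 5) (c : ℂ), c ≠ 0 ∧ v = Pi.single j c)) := by
  have crit (v : Fin 5 → ℂ) :
      (∀ j, eval v (pderiv j e3) = 0) ↔ (Function.support v).Subsingleton :=
    (stmt_8_general (by decide) v).trans <|
      Nat.lt_succ_iff.trans Set.ncard_le_one_iff_subsingleton
  exact ⟨fun v ↦ (crit v).mp,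
    fun v hv _ ↦ (crit v).trans (support_subsingleton_iff_exists_eq_single hv)⟩
end

section
/- Let e_3 = Σ_{0≤i<j<k≤4} x_i x_j x_k ∈ ℂ[x_0,…,x_4], let v ∈ ℂ^5 be nonzero with e_3(v) = 0, and let O(v) = { ℂ·(v∘σ) : σ ∈ S_5 } be the set of complex lines spanned by the coordinate permutations of v, whose cardinality is the length of the S_5-orbit of the point [v] of the cubic threefold Y = {e_3 = 0} ⊂ ℙ^4. If |O(v)| ≤ 5, then either v has exactly one nonzero coordinate (so [v] is one of the five coordinate points, and |O(v)| = 5), or there exist σ ∈ S_5 and c ∈ ℂ \ {0} with v∘σ = c·(−2,3,3,3,3) (and |O(v)| = 5). In particular, Y contains no S_5-fixed point, and Y contains exactly two S_5-orbits of length at most 5: the set of five coordinate points and the orbit of [−2:3:3:3:3]. -/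
open MvPolynomial

/-- The set of complex lines `ℂ·(v∘σ)`, `σ ∈ S₅`, spanned by the coordinate
permutations of `v`; its cardinality is the length of the `S₅`-orbit of the
projective point `[v]`. -/
def orb (v : Fin 5 → ℂ) : Set (Set (Fin 5 → ℂ)) :=
  Set.range fun σ : Equiv.Perm (Fin 5) => {w | ∃ c : ℂ, w = c • (v ∘ ⇑σ)}

/-!
If `v k ≠ 0`, rearrangements of `v` which fix the coordinate `k` span different lines as soon as
they are different. When every value occurs at most twice among the other four coordinates, there
are at least `4! / (2! 2!) = 6` of them, so an orbit of length at most `5` forces some value to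
occur three times among the coordinates other than `k`. If this value is nonzero, the same argument
at one of its coordinates produces a fourth occurrence. If it is zero, then `v` has at most two
nonzero coordinates, and exactly two would give `10` different supports. Hence `v` is constantly
`b` except for one coordinate `a`, and `e₃ (a, b, b, b, b) = 2 b² (3 a + 2 b)`.
-/

open Finset Function

variable {ι K : Type*} [Field K]

/-- The set of lines `K ∙ (v ∘ σ)` spanned by the coordinate permutations of `v`. For `v ≠ 0` this
is the orbit of `[v]` in projective space. -/
def permLines (v : ι → K) : Set (Submodule K (ι → K)) :=
  Set.range fun σ : Equiv.Perm ι ↦ K ∙ (v ∘ σ)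

lemma permLines_eq_singleton {v : ι → K} (hv0 : v ≠ 0)
    (hfixed : ∀ σ : Equiv.Perm ι, ∃ c : K, v ∘ σ = c • v) : permLines v = {K ∙ v} := by
  refine Set.range_eq_singleton_iff.mpr fun σ ↦ ?_
  obtain ⟨c, hc⟩ := hfixed σ
  have hc0 : c ≠ 0 := by
    rintro rfl
    refine hv0 (σ.surjective.injective_comp_right ?_)
    simpa using hc
  rw [hc, Submodule.span_singleton_smul_eq hc0.isUnit]

section Counting

variable {v : ι → K}

lemma ncard_range_le_ncard_permLines [Finite ι] {G γ : Type*} [Nonempty G]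
    (p : G → Equiv.Perm ι) (g : G → γ)
    (hg : ∀ σ τ, ∀ c : Kˣ, c • (v ∘ p σ) = v ∘ p τ → g σ = g τ) :
    (Set.range g).ncard ≤ (permLines v).ncard := by
  have hfactor : g.FactorsThrough fun σ ↦ K ∙ (v ∘ p σ) := fun σ τ h ↦
    let ⟨c, hc⟩ := Submodule.span_singleton_eq_span_singleton.mp h
    hg σ τ c hc
  have : Nonempty γ := .map g ‹_›
  obtain ⟨e, rfl⟩ := (factorsThrough_iff g).mp hfactor
  have hfinite : (permLines v).Finite := Set.finite_range _
  have hsubset : Set.range (fun σ ↦ K ∙ (v ∘ p σ)) ⊆ permLines v :=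
    Set.range_subset_iff.mpr fun σ ↦ ⟨p σ, rfl⟩
  rw [Set.range_comp]
  exact (Set.ncard_image_le (hfinite.subset hsubset)).trans (Set.ncard_le_ncard hsubset hfinite)

lemma choose_card_support_le_ncard_permLines [Fintype ι] [DecidableEq K] (v : ι → K) :
    (Fintype.card ι).choose #{i | v i ≠ 0} ≤ (permLines v).ncard := by
  have hsupport (σ τ : Equiv.Perm ι) (c : Kˣ) (h : c • (v ∘ σ) = v ∘ τ) :
      ({i | v (σ i) ≠ 0} : Finset ι) = ({i | v (τ i) ≠ 0} : Finset ι) := by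
    ext i
    have hi : c • v (σ i) = v (τ i) := congrFun h i
    simp [← hi, Units.smul_def]
  have hall : (powersetCard #{i | v i ≠ 0} (univ : Finset ι) : Set (Finset ι)) ⊆
      Set.range fun σ : Equiv.Perm ι ↦ ({i | v (σ i) ≠ 0} : Finset ι) := by
    intro s hs
    obtain ⟨σ, hσ⟩ := Equiv.Perm.exists_map_finset_eq s {i | v i ≠ 0} (mem_powersetCard.mp hs).2
    refine ⟨σ, ?_⟩
    ext i
    have hi : σ i ∈ s.map σ.toEmbedding ↔ i ∈ s := mem_map' σ.toEmbedding
    simpa [hσ] using hi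
  calc (Fintype.card ι).choose #{i | v i ≠ 0}
      = (powersetCard #{i | v i ≠ 0} (univ : Finset ι) : Set (Finset ι)).ncard := by
        rw [Set.ncard_coe_finset, card_powersetCard, card_univ]
    _ ≤ _ := Set.ncard_le_ncard hall (Set.finite_range _)
    _ ≤ _ := ncard_range_le_ncard_permLines id _ hsupport

lemma card_support_eq_one_of_ncard_permLines_le [Fintype ι] [DecidableEq K]
    (hι : Fintype.card ι = 5) (hv : (permLines v).ncard ≤ 5) (hv0 : v ≠ 0)
    (hsupport : #{i | v i ≠ 0} ≤ 2) :
    #{i | v i ≠ 0} = 1 := by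
  obtain ⟨k, hk⟩ := ne_iff.mp hv0
  have hpos : 0 < #{i | v i ≠ 0} := card_pos.mpr ⟨k, by simpa using hk⟩
  have hchoose := (choose_card_support_le_ncard_permLines v).trans hv
  rw [hι] at hchoose
  interval_cases #{i | v i ≠ 0}
  · rfl
  · exact absurd hchoose (by decide)

lemma ncard_range_comp_perm_compl_le_ncard_permLines [Finite ι] {k : ι} (hk : v k ≠ 0) :
    (Set.range fun σ : Equiv.Perm {i // i ≠ k} ↦ (fun i : {i // i ≠ k} ↦ v i) ∘ σ).ncard ≤
      (permLines v).ncard := by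
  classical
  -- Vectors on a common line that agree at a coordinate where they do not vanish are equal.
  refine ncard_range_le_ncard_permLines Equiv.Perm.ofSubtype _ fun σ τ c hc ↦ ?_
  have hfix (ρ : Equiv.Perm {i // i ≠ k}) : Equiv.Perm.ofSubtype ρ k = k :=
    Equiv.Perm.ofSubtype_apply_of_not_mem ρ (by simp)
  have hc1 : (c : K) = 1 := by
    have := congrFun hc k
    simpa [hfix, Units.smul_def, hk] using this
  funext i
  have := congrFun hc i
  simpa [Units.smul_def, hc1] using this

end Counting

section Fibres

variable {α β : Type*} [Fintype α] [DecidableEq β]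

lemma sq_prod_factorial_card_fiber_le {f : α → β} (hf : ∀ b, #{a | f a = b} ≤ 2) :
    (∏ b ∈ univ.image f, (#{a | f a = b}).factorial) ^ 2 ≤ 2 ^ Fintype.card α := by
  have hsq : ∀ m ≤ 2, m.factorial ^ 2 ≤ 2 ^ m := by decide
  calc (∏ b ∈ univ.image f, (#{a | f a = b}).factorial) ^ 2
      = ∏ b ∈ univ.image f, (#{a | f a = b}).factorial ^ 2 := (prod_pow ..).symm
    _ ≤ ∏ b ∈ univ.image f, 2 ^ #{a | f a = b} := prod_le_prod' fun b _ ↦ hsq _ (hf b)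
    _ = 2 ^ Fintype.card α := by rw [prod_pow_eq_pow_sum, ← card_eq_sum_card_image, card_univ]

lemma ncard_range_comp_perm_mul_prod_factorial (f : α → β) :
    (Set.range fun σ : Equiv.Perm α ↦ f ∘ σ).ncard *
      ∏ b ∈ univ.image f, (#{a | f a = b}).factorial = (Fintype.card α).factorial := by
  classical
  have horbit : MulAction.orbit (Equiv.Perm α)ᵈᵐᵃ f = Set.range fun σ : Equiv.Perm α ↦ f ∘ σ :=
    DomMulAct.mk.symm.surjective.range_comp (fun σ : Equiv.Perm α ↦ f ∘ σ)
  have hstab : Nat.card (MulAction.stabilizer (Equiv.Perm α)ᵈᵐᵃ f) =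
      ∏ b ∈ univ.image f, (#{a | f a = b}).factorial := by
    calc Nat.card (MulAction.stabilizer (Equiv.Perm α)ᵈᵐᵃ f)
        = Nat.card {σ : Equiv.Perm α // f ∘ σ = f} :=
          Nat.card_congr (DomMulAct.mk.symm.subtypeEquiv fun _ ↦ Iff.rfl)
      _ = ∏ b ∈ univ.image f, (#{a | f a = b}).factorial := by
        rw [Nat.card_eq_fintype_card, DomMulAct.stabilizer_card']
        simp only [Fintype.card_subtype]
  rw [← horbit, ← MulAction.index_stabilizer, ← hstab, mul_comm, Subgroup.card_mul_index,
    Nat.card_congr DomMulAct.mk.symm, Nat.card_perm, Nat.card_eq_fintype_card]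

end Fibres

section FewLines

variable [Fintype ι] {v : ι → K}

lemma exists_three_le_card_fiber_of_ncard_permLines_le [DecidableEq ι] [DecidableEq K]
    (hι : Fintype.card ι = 5) (hv : (permLines v).ncard ≤ 5) {k : ι} (hk : v k ≠ 0) :
    ∃ a, 3 ≤ #(({i | v i = a} : Finset ι).erase k) := by
  by_contra! h
  let w : {i // i ≠ k} → K := fun i ↦ v i
  have hw (a : K) : #{i | w i = a} ≤ 2 := by
    have hcard : #{i | w i = a} = #(({i | v i = a} : Finset ι).erase k) := by
      rw [← Fintype.card_subtype, ← Fintype.card_coe]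
      exact Fintype.card_congr
        ((Equiv.subtypeSubtypeEquivSubtypeInter (· ≠ k) (v · = a)).trans
          (Equiv.subtypeEquivRight fun i ↦ by simp))
    have := h a
    lia
  have hcard : Fintype.card {i // i ≠ k} = 4 := by
    rw [Fintype.card_subtype_compl, hι, Fintype.card_subtype_eq]
  have hprod : ∏ a ∈ univ.image w, (#{i | w i = a}).factorial ≤ 4 := by
    have := sq_prod_factorial_card_fiber_le hw
    rw [hcard] at this
    exact (Nat.pow_le_pow_iff_left two_ne_zero).mp this
  have horbit : (Set.range fun σ : Equiv.Perm {i // i ≠ k} ↦ w ∘ σ).ncard ≤ 5 :=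
    (ncard_range_comp_perm_compl_le_ncard_permLines hk).trans hv
  have h24 : (4).factorial ≤ 5 * 4 := by
    rw [← hcard, ← ncard_range_comp_perm_mul_prod_factorial w, hcard]
    exact Nat.mul_le_mul horbit hprod
  exact absurd h24 (by decide)

lemma exists_four_le_card_fiber_of_ncard_permLines_le [DecidableEq K] (hι : Fintype.card ι = 5)
    (hv : (permLines v).ncard ≤ 5) (hv0 : v ≠ 0) : ∃ a, 4 ≤ #{i | v i = a} := by
  classical
  have hfiber {k : ι} (hk : v k ≠ 0) := exists_three_le_card_fiber_of_ncard_permLines_le hι hv hk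
  obtain ⟨k, hk⟩ := ne_iff.mp hv0
  obtain ⟨a, ha⟩ := hfiber hk
  have ha : 3 ≤ #{i | v i = a} := ha.trans card_erase_le
  refine ⟨a, ?_⟩
  rcases eq_or_ne a 0 with rfl | ha0
  · have hsplit : #{i | v i = 0} + #{i | v i ≠ 0} = 5 := by
      rw [card_filter_add_card_filter_not, card_univ, hι]
    have := card_support_eq_one_of_ncard_permLines_le hι hv hv0 (by lia)
    lia
  · obtain ⟨l, hl⟩ : ({i | v i = a} : Finset ι).Nonempty := card_pos.mp (by lia)
    obtain ⟨b, hb⟩ := hfiber (k := l) (by simp_all)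
    obtain rfl : a = b := by
      by_contra hab
      have hdisjoint : Disjoint ({i | v i = a} : Finset ι) ({i | v i = b} : Finset ι) :=
        disjoint_filter.mpr fun i _ hia hib ↦ hab (hia.symm.trans hib)
      have htotal := card_le_univ (({i | v i = a} : Finset ι) ∪ ({i | v i = b} : Finset ι))
      rw [card_union_of_disjoint hdisjoint, hι] at htotal
      have := hb.trans card_erase_le
      lia
    rw [card_erase_of_mem hl] at hb
    lia

lemma exists_eq_update_const_of_ncard_permLines_le [DecidableEq ι] (hι : Fintype.card ι = 5)
    (hv : (permLines v).ncard ≤ 5) (hv0 : v ≠ 0) : ∃ j a b, v = update (const ι b) j a := by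
  classical
  obtain ⟨b, hb⟩ := exists_four_le_card_fiber_of_ncard_permLines_le hι hv hv0
  have hsplit : #{i | v i = b} + #{i | v i ≠ b} = 5 := by
    rw [card_filter_add_card_filter_not, card_univ, hι]
  have : Nonempty ι := Fintype.card_pos_iff.mp (by lia)
  obtain ⟨j, hj⟩ := card_le_one_iff_subset_singleton.mp (show #{i | v i ≠ b} ≤ 1 by lia)
  refine ⟨j, v j, b, funext fun i ↦ ?_⟩
  rcases eq_or_ne i j with rfl | hij
  · simp
  · have : i ∉ ({i | v i ≠ b} : Finset ι) := fun hi ↦ hij (by simpa using hj hi)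
    simpa [hij] using this

end FewLines

section UpdateConst

variable [DecidableEq ι] {a b c d : K} {i j : ι}

lemma permLines_update_const (a b : K) (j : ι) :
    permLines (update (const ι b) j a) = Set.range fun i ↦ K ∙ update (const ι b) i a := by
  have hcomp (σ : Equiv.Perm ι) :
      update (const ι b) j a ∘ σ = update (const ι b) (σ.symm j) a :=
    update_comp_equiv ..
  simp only [permLines, hcomp]
  have hsurjective : Surjective fun σ : Equiv.Perm ι ↦ σ.symm j := fun i ↦
    ⟨Equiv.swap j i, by simp⟩
  exact hsurjective.range_comp fun i ↦ K ∙ update (const ι b) i a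

variable [Fintype ι]

lemma exists_units_smul_of_span_update_const_eq (hι : 2 < Fintype.card ι)
    (h : (K ∙ update (const ι b) i a) = K ∙ update (const ι d) j c) :
    ∃ z : Kˣ, z • update (const ι b) i a = update (const ι d) j c ∧ z * b = d := by
  obtain ⟨z, hz⟩ := Submodule.span_singleton_eq_span_singleton.mp h
  obtain ⟨m, -, hm⟩ := exists_mem_notMem_of_card_lt_card (s := {i, j}) (t := univ)
    (card_le_two.trans_lt hι)
  obtain ⟨hmi, hmj⟩ : m ≠ i ∧ m ≠ j := by simpa using hm
  exact ⟨z, hz, by simpa [hmi, hmj, Units.smul_def] using congrFun hz m⟩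

lemma injective_span_update_const (hι : 2 < Fintype.card ι) (hab : a ≠ b) :
    Injective fun i : ι ↦ K ∙ update (const ι b) i a := by
  intro i j h
  by_contra hij
  obtain ⟨z, hz, hzb⟩ := exists_units_smul_of_span_update_const_eq hι h
  have hj : z * b = a := by simpa [Ne.symm hij, Units.smul_def] using congrFun hz j
  exact hab (hj.symm.trans hzb)

lemma ncard_permLines_update_const (hι : 2 < Fintype.card ι) (hab : a ≠ b) (j : ι) :
    (permLines (update (const ι b) j a)).ncard = Fintype.card ι := by
  rw [permLines_update_const, Set.ncard_range_of_injective (injective_span_update_const hι hab),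
    Nat.card_eq_fintype_card]

lemma disjoint_permLines_update_const_zero (hι : 2 < Fintype.card ι) (a c : K) (i j : ι)
    (hd : d ≠ 0) :
    Disjoint (permLines (update (const ι 0) i a)) (permLines (update (const ι d) j c)) := by
  rw [permLines_update_const, permLines_update_const, Set.disjoint_left]
  rintro _ ⟨i, rfl⟩ ⟨j, h⟩
  obtain ⟨z, -, hz⟩ := exists_units_smul_of_span_update_const_eq hι h.symm
  exact hd (by simpa using hz.symm)

end UpdateConst

section Esymm

variable {R : Type*} [CommSemiring R]

lemma multiset_esymm_cons (a : R) (s : Multiset R) (n : ℕ) :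
    (a ::ₘ s).esymm (n + 1) = s.esymm (n + 1) + a * s.esymm n := by
  simp [Multiset.esymm, Multiset.powersetCard_cons, Multiset.sum_map_mul_left]

lemma multiset_esymm_replicate (m n : ℕ) (b : R) :
    (Multiset.replicate m b).esymm n = m.choose n * b ^ n := by
  have hprod : ∀ t ∈ (Multiset.replicate m b).powersetCard n, t.prod = b ^ n := fun t ht ↦ by
    obtain ⟨hle, hcard⟩ := Multiset.mem_powersetCard.mp ht
    obtain ⟨k, -, rfl⟩ := Multiset.le_replicate_iff.mp hle
    rw [Multiset.prod_replicate, ← hcard, Multiset.card_replicate]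
  rw [Multiset.esymm, Multiset.map_congr rfl hprod, Multiset.map_const', Multiset.sum_replicate,
    Multiset.card_powersetCard, Multiset.card_replicate, nsmul_eq_mul]

lemma eval_update_const_esymm [Fintype ι] [DecidableEq ι] (a b : R) (j : ι) (n : ℕ) :
    eval (update (const ι b) j a) (esymm ι R (n + 1)) =
      (Fintype.card ι - 1).choose (n + 1) * b ^ (n + 1) +
        a * ((Fintype.card ι - 1).choose n * b ^ n) := by
  have hvalues : univ.val.map (update (const ι b) j a) =
      a ::ₘ Multiset.replicate (Fintype.card ι - 1) b := by
    have hrest : ∀ i ∈ (univ.erase j).val, update (const ι b) j a i = b := fun i hi ↦ by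
      simp [ne_of_mem_erase hi]
    rw [← insert_erase (mem_univ j), insert_val_of_notMem (notMem_erase j univ),
      Multiset.map_cons, update_self, Multiset.map_congr rfl hrest, Multiset.map_const', card_val,
      card_erase_of_mem (mem_univ j), card_univ]
  rw [← coe_aeval_eq_eval, RingHom.coe_coe, aeval_esymm_eq_multiset_esymm, hvalues,
    multiset_esymm_cons, multiset_esymm_replicate, multiset_esymm_replicate]

end Esymm

section Cubic

variable {a b : K} {v : Fin 5 → K} {j : Fin 5}

lemma eval_update_const_esymm_three (a b : K) (j : Fin 5) :
    eval (update (const (Fin 5) b) j a) (esymm (Fin 5) K 3) = 2 * b ^ 2 * (3 * a + 2 * b) := by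
  rw [eval_update_const_esymm, Fintype.card_fin]
  norm_num [Nat.choose]
  ring

lemma single_eq_update_const {M : Type*} [Zero M] [DecidableEq ι] (j : ι) (a : M) :
    Pi.single j a = update (const ι 0) j a := rfl

lemma vec_neg_two_three_eq_update_const :
    (![-2, 3, 3, 3, 3] : Fin 5 → K) = update (const (Fin 5) 3) 0 (-2) := by
  ext i
  fin_cases i <;> rfl

lemma eq_zero_or_of_eval_update_const_eq_zero (h2 : (2 : K) ≠ 0)
    (he : eval (update (const (Fin 5) b) j a) (esymm (Fin 5) K 3) = 0) :
    b = 0 ∨ 3 * a + 2 * b = 0 := by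
  simpa [eval_update_const_esymm_three, h2] using he

lemma ne_of_eval_update_const_eq_zero (h2 : (2 : K) ≠ 0) (h5 : (5 : K) ≠ 0)
    (hv0 : update (const (Fin 5) b) j a ≠ 0)
    (he : eval (update (const (Fin 5) b) j a) (esymm (Fin 5) K 3) = 0) : a ≠ b := by
  rintro rfl
  have ha : a = 0 := (eq_zero_or_of_eval_update_const_eq_zero h2 he).elim id fun h ↦
    (mul_eq_zero.mp (show 5 * a = 0 by linear_combination h)).resolve_left h5
  exact hv0 (by simp [ha])

lemma exists_update_const_comp_eq_smul (h3 : (3 : K) ≠ 0) (hb : b ≠ 0) (j : Fin 5)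
    (hab : 3 * a + 2 * b = 0) :
    ∃ (σ : Equiv.Perm (Fin 5)) (c : K), c ≠ 0 ∧
      update (const (Fin 5) b) j a ∘ σ = c • (![-2, 3, 3, 3, 3] : Fin 5 → K) := by
  refine ⟨Equiv.swap j 0, b / 3, div_ne_zero hb h3, ?_⟩
  have ha : b / 3 * -2 = a := by
    field_simp
    linear_combination -hab
  rw [update_comp_equiv, Equiv.symm_swap, Equiv.swap_apply_left, vec_neg_two_three_eq_update_const,
    ← update_smul, smul_eq_mul, ha]
  congr 1
  exact funext fun _ ↦ (div_mul_cancel₀ b h3).symm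

lemma exists_eq_update_const_ne_of_eval_eq_zero (h2 : (2 : K) ≠ 0) (h5 : (5 : K) ≠ 0)
    (hv0 : v ≠ 0) (he : eval v (esymm (Fin 5) K 3) = 0) (hv : (permLines v).ncard ≤ 5) :
    ∃ j a b, a ≠ b ∧ (b = 0 ∨ 3 * a + 2 * b = 0) ∧ v = update (const (Fin 5) b) j a := by
  obtain ⟨j, a, b, rfl⟩ := exists_eq_update_const_of_ncard_permLines_le (Fintype.card_fin 5) hv hv0
  exact ⟨j, a, b, ne_of_eval_update_const_eq_zero h2 h5 hv0 he,
    eq_zero_or_of_eval_update_const_eq_zero h2 he, rfl⟩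

lemma eq_single_or_comp_eq_smul_of_eval_eq_zero (h2 : (2 : K) ≠ 0) (h3 : (3 : K) ≠ 0)
    (h5 : (5 : K) ≠ 0) (hv0 : v ≠ 0) (he : eval v (esymm (Fin 5) K 3) = 0)
    (hv : (permLines v).ncard ≤ 5) :
    (∃ (j : Fin 5) (c : K), c ≠ 0 ∧ v = Pi.single j c) ∨
      ∃ (σ : Equiv.Perm (Fin 5)) (c : K), c ≠ 0 ∧
        v ∘ σ = c • (![-2, 3, 3, 3, 3] : Fin 5 → K) := by
  obtain ⟨j, a, b, hab, hroot, rfl⟩ := exists_eq_update_const_ne_of_eval_eq_zero h2 h5 hv0 he hv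
  rcases eq_or_ne b 0 with rfl | hb
  · exact Or.inl ⟨j, a, hab, rfl⟩
  · exact Or.inr (exists_update_const_comp_eq_smul h3 hb j (hroot.resolve_left hb))

lemma ncard_permLines_eq_five_of_eval_eq_zero (h2 : (2 : K) ≠ 0) (h5 : (5 : K) ≠ 0)
    (hv0 : v ≠ 0) (he : eval v (esymm (Fin 5) K 3) = 0) (hv : (permLines v).ncard ≤ 5) :
    (permLines v).ncard = 5 := by
  obtain ⟨j, a, b, hab, -, rfl⟩ := exists_eq_update_const_ne_of_eval_eq_zero h2 h5 hv0 he hv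
  exact ncard_permLines_update_const (by simp) hab j

theorem stmt_9_general (h2 : (2 : K) ≠ 0) (h3 : (3 : K) ≠ 0) (h5 : (5 : K) ≠ 0) :
    (∀ v : Fin 5 → K, v ≠ 0 → eval v (esymm (Fin 5) K 3) = 0 → (permLines v).ncard ≤ 5 →
      ((∃ (j : Fin 5) (c : K), c ≠ 0 ∧ v = Pi.single j c) ∨
        (∃ (σ : Equiv.Perm (Fin 5)) (c : K), c ≠ 0 ∧
          v ∘ ⇑σ = c • (![-2, 3, 3, 3, 3] : Fin 5 → K))) ∧
        (permLines v).ncard = 5) ∧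
    (¬∃ v : Fin 5 → K, v ≠ 0 ∧ eval v (esymm (Fin 5) K 3) = 0 ∧
      ∀ σ : Equiv.Perm (Fin 5), ∃ c : K, v ∘ ⇑σ = c • v) ∧
    eval (Pi.single 0 (1 : K)) (esymm (Fin 5) K 3) = 0 ∧
    eval (![-2, 3, 3, 3, 3] : Fin 5 → K) (esymm (Fin 5) K 3) = 0 ∧
    (permLines (Pi.single (0 : Fin 5) (1 : K))).ncard = 5 ∧
    (permLines (![-2, 3, 3, 3, 3] : Fin 5 → K)).ncard = 5 ∧
    permLines (Pi.single 0 (1 : K)) ∩ permLines (![-2, 3, 3, 3, 3] : Fin 5 → K) = ∅ := by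
  have h23 : (-2 : K) ≠ 3 := fun h ↦ h5 (by linear_combination -h)
  refine ⟨fun v hv0 he hv ↦ ⟨eq_single_or_comp_eq_smul_of_eval_eq_zero h2 h3 h5 hv0 he hv,
    ncard_permLines_eq_five_of_eval_eq_zero h2 h5 hv0 he hv⟩, ?_, ?_, ?_, ?_, ?_, ?_⟩
  · rintro ⟨v, hv0, he, hfixed⟩
    have hone : (permLines v).ncard = 1 := by
      rw [permLines_eq_singleton hv0 hfixed, Set.ncard_singleton]
    have hfive := ncard_permLines_eq_five_of_eval_eq_zero h2 h5 hv0 he (by lia)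
    lia
  · rw [single_eq_update_const, eval_update_const_esymm_three]
    simp
  · norm_num [vec_neg_two_three_eq_update_const, eval_update_const_esymm_three]
  · exact ncard_permLines_update_const (by simp) one_ne_zero 0
  · rw [vec_neg_two_three_eq_update_const]
    exact ncard_permLines_update_const (by simp) h23 0
  · rw [vec_neg_two_three_eq_update_const, ← Set.disjoint_iff_inter_eq_empty]
    exact disjoint_permLines_update_const_zero (by simp) 1 (-2) 0 0 h3

end Cubic

lemma e3_eq_esymm : e3 = esymm (Fin 5) ℂ 3 := rfl

lemma orb_eq_image_permLines (v : Fin 5 → ℂ) : orb v = SetLike.coe '' permLines v := by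
  rw [orb, permLines, ← Set.range_comp]
  congr! 2 with σ
  ext w
  simp [Submodule.mem_span_singleton, eq_comm]

lemma ncard_orb (v : Fin 5 → ℂ) : (orb v).ncard = (permLines v).ncard := by
  rw [orb_eq_image_permLines, Set.ncard_image_of_injective _ SetLike.coe_injective]

lemma orb_inter_orb (v w : Fin 5 → ℂ) :
    orb v ∩ orb w = SetLike.coe '' (permLines v ∩ permLines w) := by
  simp only [orb_eq_image_permLines, Set.image_inter SetLike.coe_injective]

/-- Lemma 3.7 (small orbits on the cubic `Y = {e₃ = 0} ⊂ ℙ⁴`): any point of `Y` whose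
`S₅`-orbit has length at most `5` is either a coordinate point or lies in the orbit of
`[−2:3:3:3:3]`, and in both cases the orbit has length exactly `5`.  In particular `Y`
contains no `S₅`-fixed point, the points `[1:0:0:0:0]` and `[−2:3:3:3:3]` lie on `Y`,
their orbits have length `5`, and these two orbits are disjoint — so `Y` contains
exactly two `S₅`-orbits of length at most `5`. -/
theorem stmt_9 :
    (∀ v : Fin 5 → ℂ, v ≠ 0 → eval v e3 = 0 → (orb v).ncard ≤ 5 →
      ((∃ (j : Fin 5) (c : ℂ), c ≠ 0 ∧ v = Pi.single j c) ∨
        (∃ (σ : Equiv.Perm (Fin 5)) (c : ℂ), c ≠ 0 ∧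
          v ∘ ⇑σ = c • (![-2, 3, 3, 3, 3] : Fin 5 → ℂ))) ∧
        (orb v).ncard = 5) ∧
    (¬∃ v : Fin 5 → ℂ, v ≠ 0 ∧ eval v e3 = 0 ∧
      ∀ σ : Equiv.Perm (Fin 5), ∃ c : ℂ, v ∘ ⇑σ = c • v) ∧
    eval (Pi.single 0 (1 : ℂ)) e3 = 0 ∧
    eval (![-2, 3, 3, 3, 3] : Fin 5 → ℂ) e3 = 0 ∧
    (orb (Pi.single 0 (1 : ℂ))).ncard = 5 ∧
    (orb (![-2, 3, 3, 3, 3] : Fin 5 → ℂ)).ncard = 5 ∧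
    orb (Pi.single 0 (1 : ℂ)) ∩ orb (![-2, 3, 3, 3, 3] : Fin 5 → ℂ) = ∅ := by
  simpa only [e3_eq_esymm, ncard_orb, orb_inter_orb, Set.image_eq_empty] using
    stmt_9_general (K := ℂ) two_ne_zero three_ne_zero (by norm_num)
end
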